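/- Let G be a weighted graph with terminal set K of size k and fix a terminal v_k ∈ K. For each nonempty U ⊆ K with v_k ∉ U, fix a set A_U ⊆ V with A_U ∩ K = U and h_G(A_U) = h_K^G(U). Define an equivalence on V by u ~ v iff for every such U one has u ∈ A_U ⟺ v ∈ A_U, and let H be the quotient weighted graph obtained by contracting each equivalence class to a single vertex (capacities between distinct classes are the sums of the original capacities between them). Then H is a mimicking network for (G,K): h_K^H(U) = h_K^G(U) for every U ⊆ K. -/

import Mathlib

open scoped Classical

/-- A weighted graph with a distinguished embedded set of terminals indexed by `κ`:
a finite vertex type `V`, an embedding `ι : κ ↪ V` of the terminals, and a symmetric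
nonnegative capacity function `c` on pairs of vertices. -/
structure WeightedGraph (κ : Type) where
  V : Type
  [fintypeV : Fintype V]
  ι : κ ↪ V
  c : V → V → ℝ
  symm : ∀ u v, c u v = c v u
  nonneg : ∀ u v, 0 ≤ c u v

namespace WeightedGraph

variable {κ : Type}

instance (G : WeightedGraph κ) : Fintype G.V := G.fintypeV

/-- The cut function `h_G(A) = Σ_{u ∈ A, v ∉ A} c(u,v)`. -/
noncomputable def cutval (G : WeightedGraph κ) (A : Finset G.V) : ℝ :=
  ∑ u ∈ A, ∑ v ∈ Aᶜ, G.c u v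

/-- The vertex sets realizing the terminal partition `(U, K \ U)`. -/
noncomputable def cutSets (G : WeightedGraph κ) (U : Finset κ) : Finset (Finset G.V) :=
  Finset.univ.filter fun A => ∀ x : κ, G.ι x ∈ A ↔ x ∈ U

theorem cutSets_nonempty (G : WeightedGraph κ) (U : Finset κ) : (G.cutSets U).Nonempty := by
  refine ⟨U.image G.ι, ?_⟩
  simp [cutSets, Finset.mem_image, G.ι.injective.eq_iff]

/-- The terminal cut function `h_K^G(U) = min { h_G(A) : A ∩ K = U }`. -/
noncomputable def termCut (G : WeightedGraph κ) (U : Finset κ) : ℝ :=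
  (G.cutSets U).inf' (G.cutSets_nonempty U) G.cutval

/-- `H` is a mimicking network for `(G, K)`: all minimum terminal cut values agree. -/
def IsMimicking (G H : WeightedGraph κ) : Prop :=
  ∀ U : Finset κ, H.termCut U = G.termCut U

/-- `H` is a quotient (contraction) of `G` along the surjection `f`: terminals map to
terminals, and capacities between distinct classes are sums of the original capacities. -/
def IsQuotient (G H : WeightedGraph κ) (f : G.V → H.V) : Prop :=
  Function.Surjective f ∧ (∀ x : κ, f (G.ι x) = H.ι x) ∧
    ∀ y z : H.V, y ≠ z →
      H.c y z = ∑ u ∈ Finset.univ.filter (fun u => f u = y),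
        ∑ v ∈ Finset.univ.filter (fun v => f v = z), G.c u v

end WeightedGraph

/-! Cuts of the quotient `H` correspond, with the same value, to the vertex sets of `G` that are
unions of classes. Hence contraction can only raise terminal cut values, and it preserves the value
at `U` as soon as some minimum cut for `U` is a union of classes, as `A_U` is by construction.
Complementation is a symmetry of both terminal cut functions, which reduces every `U` to one
avoiding the fixed terminal. -/

namespace WeightedGraph

section Cuts

variable {κ : Type} (G : WeightedGraph κ) {U : Finset κ} {A : Finset G.V}

/-- `A` is a minimum terminal cut for `U`: it meets the terminals exactly in `U` and attains the
terminal cut value of `U`. -/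
def IsMinCut (U : Finset κ) (A : Finset G.V) : Prop :=
  (∀ x, G.ι x ∈ A ↔ x ∈ U) ∧ G.cutval A = G.termCut U

theorem mem_cutSets : A ∈ G.cutSets U ↔ ∀ x, G.ι x ∈ A ↔ x ∈ U := by
  simp [cutSets]

theorem termCut_le_cutval (hA : ∀ x, G.ι x ∈ A ↔ x ∈ U) : G.termCut U ≤ G.cutval A :=
  Finset.inf'_le _ (G.mem_cutSets.2 hA)

theorem exists_isMinCut (U : Finset κ) : ∃ A, G.IsMinCut U A := by
  obtain ⟨A, hA, hval⟩ := Finset.exists_mem_eq_inf' (G.cutSets_nonempty U) G.cutval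
  exact ⟨A, G.mem_cutSets.1 hA, hval.symm⟩

theorem cutval_nonneg (A : Finset G.V) : 0 ≤ G.cutval A :=
  Finset.sum_nonneg fun _ _ => Finset.sum_nonneg fun _ _ => G.nonneg _ _

theorem cutval_empty : G.cutval ∅ = 0 :=
  Finset.sum_empty

theorem cutval_compl (A : Finset G.V) : G.cutval Aᶜ = G.cutval A := by
  simp only [cutval, compl_compl]
  rw [Finset.sum_comm]
  simp only [G.symm]

theorem termCut_empty : G.termCut ∅ = 0 := by
  apply le_antisymm
  · exact (G.termCut_le_cutval (by simp)).trans_eq G.cutval_empty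
  · exact Finset.le_inf' _ _ fun A _ => G.cutval_nonneg A

theorem termCut_compl [Fintype κ] (U : Finset κ) : G.termCut Uᶜ = G.termCut U := by
  have termCut_compl_le (W : Finset κ) : G.termCut Wᶜ ≤ G.termCut W := by
    obtain ⟨A, hA, hval⟩ := G.exists_isMinCut W
    calc
      G.termCut Wᶜ ≤ G.cutval Aᶜ := G.termCut_le_cutval (by simp [hA])
      _ = G.termCut W := by rw [G.cutval_compl, hval]
  exact (termCut_compl_le U).antisymm (by simpa using termCut_compl_le Uᶜ)

end Cuts

variable {κ : Type} {G H : WeightedGraph κ}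

theorem isMimicking_of_forall_notMem (t : κ)
    (h : ∀ U : Finset κ, U.Nonempty → t ∉ U → H.termCut U = G.termCut U) :
    IsMimicking G H := by
  let _ : Fintype κ := .ofInjective G.ι G.ι.injective
  have eq_of_notMem (U : Finset κ) (ht : t ∉ U) : H.termCut U = G.termCut U := by
    rcases U.eq_empty_or_nonempty with rfl | hU
    · rw [H.termCut_empty, G.termCut_empty]
    · exact h U hU ht
  intro U
  by_cases ht : t ∈ U
  · rw [← H.termCut_compl, ← G.termCut_compl]
    exact eq_of_notMem Uᶜ (by simpa using ht)
  · exact eq_of_notMem U ht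

namespace IsQuotient

variable {f : G.V → H.V} {U : Finset κ} {A : Finset G.V}

theorem cutval_preimage (hq : IsQuotient G H f) (B : Finset H.V) :
    G.cutval {u | f u ∈ B} = H.cutval B := by
  calc
    G.cutval {u | f u ∈ B} = ∑ u with f u ∈ B, ∑ v with f v ∈ Bᶜ, G.c u v := by
      simp only [cutval, Finset.compl_filter, Finset.mem_compl]
    _ = ∑ y ∈ B, ∑ u with f u = y, ∑ z ∈ Bᶜ, ∑ v with f v = z, G.c u v := by
      simp only [Finset.sum_fiberwise_eq_sum_filter Finset.univ _ f]
    _ = ∑ y ∈ B, ∑ z ∈ Bᶜ, ∑ u with f u = y, ∑ v with f v = z, G.c u v :=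
      Finset.sum_congr rfl fun _ _ => Finset.sum_comm
    _ = H.cutval B :=
      Finset.sum_congr rfl fun y hy => Finset.sum_congr rfl fun z hz =>
        (hq.2.2 y z (ne_of_mem_of_not_mem hy (Finset.mem_compl.1 hz))).symm

theorem termCut_le (hq : IsQuotient G H f) (U : Finset κ) : G.termCut U ≤ H.termCut U := by
  obtain ⟨B, hB, hval⟩ := H.exists_isMinCut U
  calc
    G.termCut U ≤ G.cutval {u | f u ∈ B} := G.termCut_le_cutval (by simp [hq.2.1, hB])
    _ = H.termCut U := by rw [hq.cutval_preimage, hval]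

theorem termCut_eq_of_isMinCut (hq : IsQuotient G H f) (hA : G.IsMinCut U A)
    (hsat : ∀ x y, f x = f y → (x ∈ A ↔ y ∈ A)) : H.termCut U = G.termCut U := by
  have mem_image_iff (v : G.V) : f v ∈ A.image f ↔ v ∈ A := by
    rw [Finset.mem_image]
    exact ⟨fun ⟨a, ha, hav⟩ => (hsat a v hav).1 ha, fun hv => ⟨v, hv, rfl⟩⟩
  refine le_antisymm ?_ (hq.termCut_le U)
  calc
    H.termCut U ≤ H.cutval (A.image f) :=
      H.termCut_le_cutval fun x => by rw [← hq.2.1, mem_image_iff, hA.1]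
    _ = G.cutval A := by simp only [← hq.cutval_preimage, mem_image_iff, Finset.filter_univ_mem]
    _ = G.termCut U := hA.2

end IsQuotient

end WeightedGraph

theorem quotient_by_minimum_cuts_is_mimicking_general {κ : Type}
    {G H : WeightedGraph κ} {f : G.V → H.V} (hq : WeightedGraph.IsQuotient G H f) (t : κ)
    (hcut : ∀ U : Finset κ, U.Nonempty → t ∉ U →
      ∃ A, G.IsMinCut U A ∧ ∀ x y, f x = f y → (x ∈ A ↔ y ∈ A)) :
    WeightedGraph.IsMimicking G H := by
  refine WeightedGraph.isMimicking_of_forall_notMem t fun U hU ht => ?_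
  obtain ⟨A, hA, hsat⟩ := hcut U hU ht
  exact hq.termCut_eq_of_isMinCut hA hsat

/-- contracting the classes of the equivalence "lies on the same side of
each fixed minimum terminal cut `A_U` (for nonempty `U ⊆ K` with `v_k ∉ U`)" yields a
mimicking network for `(G, K)`. -/
theorem quotient_by_minimum_cuts_is_mimicking {κ : Type} [Fintype κ]
    (G H : WeightedGraph κ) (t : κ) (A : Finset κ → Finset G.V)
    (hA : ∀ U : Finset κ, U.Nonempty → t ∉ U →
      (∀ x : κ, G.ι x ∈ A U ↔ x ∈ U) ∧ G.cutval (A U) = G.termCut U)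
    (f : G.V → H.V) (hq : WeightedGraph.IsQuotient G H f)
    (hf : ∀ x y : G.V, f x = f y ↔
      (∀ U : Finset κ, U.Nonempty → t ∉ U → (x ∈ A U ↔ y ∈ A U))) :
    WeightedGraph.IsMimicking G H :=
  quotient_by_minimum_cuts_is_mimicking_general hq t fun U hU ht =>
    ⟨A U, hA U hU ht, fun x y hxy => (hf x y).1 hxy U hU ht⟩
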